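/- The stabilizer of φ acts transitively on orthonormal pairs: if u₁, u₂ ∈ ℝ⁷ and v₁, v₂ ∈ ℝ⁷ each satisfy |u₁| = |u₂| = |v₁| = |v₂| = 1, ⟨u₁,u₂⟩ = 0, and ⟨v₁,v₂⟩ = 0, then there exists g ∈ GL(7,ℝ) with g*φ = φ, g u₁ = v₁, and g u₂ = v₂. -/

import Mathlib

open scoped BigOperators Matrix

noncomputable section

namespace G2

/-- The standard basis vector `e i` of `ℝ⁷`. -/
def e (i : Fin 7) : Fin 7 → ℝ := fun j => if j = i then 1 else 0

/-- The 3-form `e^a ∧ e^b ∧ e^c` (determinant convention), evaluated on `(x, y, z)`. -/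
def w3 (a b c : Fin 7) (x y z : Fin 7 → ℝ) : ℝ :=
  x a * (y b * z c - y c * z b) - x b * (y a * z c - y c * z a)
    + x c * (y a * z b - y b * z a)

/-- The 4-form `e^a ∧ e^b ∧ e^c ∧ e^d`, evaluated on `(x, y, z, w)`. -/
def w4 (a b c d : Fin 7) (x y z w : Fin 7 → ℝ) : ℝ :=
  Matrix.det !![x a, x b, x c, x d; y a, y b, y c, y d;
                z a, z b, z c, z d; w a, w b, w c, w d]

/-- The fundamental `G₂` 3-form
`φ = e^{123}+e^{145}+e^{167}+e^{246}-e^{257}-e^{347}-e^{356}` (indices shifted to start at 0),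
as a trilinear alternating function of three vectors. -/
def phi (x y z : Fin 7 → ℝ) : ℝ :=
  w3 0 1 2 x y z + w3 0 3 4 x y z + w3 0 5 6 x y z + w3 1 3 5 x y z
    - w3 1 4 6 x y z - w3 2 3 6 x y z - w3 2 4 5 x y z

/-- The 4-form `ψ = *φ = e^{4567}+e^{2367}+e^{2345}+e^{1357}-e^{1346}-e^{1256}-e^{1247}`
(indices shifted to start at 0), as a function of four vectors. -/
def psi (x y z w : Fin 7 → ℝ) : ℝ :=
  w4 3 4 5 6 x y z w + w4 1 2 5 6 x y z w + w4 1 2 3 4 x y z w + w4 0 2 4 6 x y z w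
    - w4 0 2 3 5 x y z w - w4 0 1 4 5 x y z w - w4 0 1 3 6 x y z w

/-- `ε_{ijk} = φ(e_i, e_j, e_k)`. -/
def eps (i j k : Fin 7) : ℝ := phi (e i) (e j) (e k)

/-- `ε_{ijkl} = ψ(e_i, e_j, e_k, e_l)`. -/
def eps4 (i j k l : Fin 7) : ℝ := psi (e i) (e j) (e k) (e l)

/-- The volume form `e^1 ∧ ⋯ ∧ e^7`, evaluated on a 7-tuple of vectors. -/
def vol (v : Fin 7 → (Fin 7 → ℝ)) : ℝ := Matrix.det (Matrix.of fun i j => v i j)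

/-- The matrix `[v]` with `[v]_{ij} = Σ_k ε_{ijk} v_k`. -/
def bracket (v : Fin 7 → ℝ) : Matrix (Fin 7) (Fin 7) ℝ :=
  Matrix.of fun i j => ∑ k : Fin 7, eps i j k * v k

/-- The vector `⟨A⟩` with `⟨A⟩_i = Σ_{j,k} ε_{ijk} A_{jk}`. -/
def angle (A : Matrix (Fin 7) (Fin 7) ℝ) : Fin 7 → ℝ :=
  fun i => ∑ j : Fin 7, ∑ k : Fin 7, eps i j k * A j k

/-- Wedge product of two 2-forms (determinant convention), evaluated on four vectors. -/
def wedge22 (A B : (Fin 7 → ℝ) → (Fin 7 → ℝ) → ℝ) (v : Fin 4 → (Fin 7 → ℝ)) : ℝ :=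
  (1 / 4 : ℝ) * ∑ σ : Equiv.Perm (Fin 4),
    ((Equiv.Perm.sign σ : ℤ) : ℝ) * (A (v (σ 0)) (v (σ 1)) * B (v (σ 2)) (v (σ 3)))

/-- Wedge product of three 2-forms (determinant convention), evaluated on six vectors. -/
def wedge222 (A B C : (Fin 7 → ℝ) → (Fin 7 → ℝ) → ℝ) (v : Fin 6 → (Fin 7 → ℝ)) : ℝ :=
  (1 / 8 : ℝ) * ∑ σ : Equiv.Perm (Fin 6),
    ((Equiv.Perm.sign σ : ℤ) : ℝ) *
      (A (v (σ 0)) (v (σ 1)) * B (v (σ 2)) (v (σ 3)) * C (v (σ 4)) (v (σ 5)))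

/-- Wedge product of two 2-forms and a 3-form (determinant convention),
evaluated on seven vectors. -/
def wedge223 (A B : (Fin 7 → ℝ) → (Fin 7 → ℝ) → ℝ)
    (C : (Fin 7 → ℝ) → (Fin 7 → ℝ) → (Fin 7 → ℝ) → ℝ)
    (v : Fin 7 → (Fin 7 → ℝ)) : ℝ :=
  (1 / 24 : ℝ) * ∑ σ : Equiv.Perm (Fin 7),
    ((Equiv.Perm.sign σ : ℤ) : ℝ) *
      (A (v (σ 0)) (v (σ 1)) * B (v (σ 2)) (v (σ 3)) * C (v (σ 4)) (v (σ 5)) (v (σ 6)))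

/-- The map `i_φ : S²(ℝ⁷)* → Λ³(ℝ⁷)*`,
`i_φ(h) = Σ_{i,j,k,l} ε_{ikl} h_{ij} e^j ∧ e^k ∧ e^l`, evaluated on `(x, y, z)`. -/
def iphi (h : Fin 7 → Fin 7 → ℝ) (x y z : Fin 7 → ℝ) : ℝ :=
  ∑ i : Fin 7, ∑ j : Fin 7, ∑ k : Fin 7, ∑ l : Fin 7, eps i k l * h i j * w3 j k l x y z

/-- cross product -/
def cr (x y : Fin 7 → ℝ) : Fin 7 → ℝ :=
  ![x 1 * y 2 - x 2 * y 1 + (x 3 * y 4 - x 4 * y 3) + (x 5 * y 6 - x 6 * y 5),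
    x 2 * y 0 - x 0 * y 2 + (x 3 * y 5 - x 5 * y 3) - (x 4 * y 6 - x 6 * y 4),
    x 0 * y 1 - x 1 * y 0 - (x 3 * y 6 - x 6 * y 3) - (x 4 * y 5 - x 5 * y 4),
    x 4 * y 0 - x 0 * y 4 + (x 5 * y 1 - x 1 * y 5) - (x 6 * y 2 - x 2 * y 6),
    x 0 * y 3 - x 3 * y 0 - (x 6 * y 1 - x 1 * y 6) - (x 5 * y 2 - x 2 * y 5),
    x 6 * y 0 - x 0 * y 6 + (x 1 * y 3 - x 3 * y 1) - (x 2 * y 4 - x 4 * y 2),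
    x 0 * y 5 - x 5 * y 0 - (x 1 * y 4 - x 4 * y 1) - (x 2 * y 3 - x 3 * y 2)]

/-- inner product -/
def ip (x y : Fin 7 → ℝ) : ℝ :=
  x 0 * y 0 + x 1 * y 1 + x 2 * y 2 + x 3 * y 3 + x 4 * y 4 + x 5 * y 5 + x 6 * y 6

lemma phi_eq (x y z : Fin 7 → ℝ) : phi x y z = ip (cr x y) z := by
  simp [phi, w3, ip, cr]; ring

lemma ip_comm (x y : Fin 7 → ℝ) : ip x y = ip y x := by simp only [ip]; ring
lemma ip_add_left (x y z : Fin 7 → ℝ) : ip (x + y) z = ip x z + ip y z := by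
  simp [ip]; ring
lemma ip_smul_left (r : ℝ) (x z : Fin 7 → ℝ) : ip (r • x) z = r * ip x z := by
  simp [ip]; ring
lemma ip_add_right (x y z : Fin 7 → ℝ) : ip z (x + y) = ip z x + ip z y := by
  simp [ip]; ring
lemma ip_smul_right (r : ℝ) (x z : Fin 7 → ℝ) : ip z (r • x) = r * ip z x := by
  simp [ip]; ring
lemma ip_neg_right (x z : Fin 7 → ℝ) : ip z (-x) = - ip z x := by
  simp [ip]; ring
lemma ip_neg_left (x z : Fin 7 → ℝ) : ip (-x) z = - ip x z := by
  simp [ip]; ring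

lemma cr_self (x : Fin 7 → ℝ) : cr x x = 0 := by
  ext i; fin_cases i <;> simp [cr] <;> ring
lemma cr_anti (x y : Fin 7 → ℝ) : cr y x = - cr x y := by
  ext i; fin_cases i <;> simp [cr] <;> ring
lemma cr_add_left (x y z : Fin 7 → ℝ) : cr (x + y) z = cr x z + cr y z := by
  ext i; fin_cases i <;> simp [cr] <;> ring
lemma cr_add_right (x y z : Fin 7 → ℝ) : cr z (x + y) = cr z x + cr z y := by
  ext i; fin_cases i <;> simp [cr] <;> ring
lemma cr_smul_left (r : ℝ) (x z : Fin 7 → ℝ) : cr (r • x) z = r • cr x z := by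
  ext i; fin_cases i <;> simp [cr] <;> ring
lemma cr_smul_right (r : ℝ) (x z : Fin 7 → ℝ) : cr z (r • x) = r • cr z x := by
  ext i; fin_cases i <;> simp [cr] <;> ring
lemma cr_neg_left (x z : Fin 7 → ℝ) : cr (-x) z = - cr x z := by
  ext i; fin_cases i <;> simp [cr] <;> ring
lemma cr_neg_right (x z : Fin 7 → ℝ) : cr z (-x) = - cr z x := by
  ext i; fin_cases i <;> simp [cr] <;> ring

lemma cr_polar (x y z : Fin 7 → ℝ) :
    cr x (cr y z) + cr y (cr x z) = (-2 * ip x y) • z + ip x z • y + ip y z • x := by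
  ext i; fin_cases i <;> simp [cr, ip] <;> ring

lemma cr_swap {x y z : Fin 7 → ℝ} (h1 : ip x y = 0) (h2 : ip x z = 0) (h3 : ip y z = 0) :
    cr x (cr y z) = - cr y (cr x z) := by
  have h := cr_polar x y z
  simp [h1, h2, h3] at h
  exact eq_neg_of_add_eq_zero_left h

lemma cr_sq {x y : Fin 7 → ℝ} (h1 : ip x x = 1) (h2 : ip x y = 0) :
    cr x (cr x y) = - y := by
  have : cr x (cr x y) = (- ip x x) • y + ip x y • x := by
    ext i; fin_cases i <;> simp [cr, ip] <;> ring
  simp [this, h1, h2]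

lemma ip_cr_self (x y : Fin 7 → ℝ) : ip x (cr x y) = 0 := by
  simp [cr, ip]; ring
lemma ip_cr_self' (x y : Fin 7 → ℝ) : ip y (cr x y) = 0 := by
  simp [cr, ip]; ring
lemma ip_cr_rot (x y z : Fin 7 → ℝ) : ip x (cr y z) = ip (cr x y) z := by
  simp [cr, ip]; ring
lemma ip_cr_cr (x y z : Fin 7 → ℝ) :
    ip (cr x y) (cr x z) = ip x x * ip y z - ip x y * ip x z := by
  simp [cr, ip]; ring

lemma exists_perp (a b c : Fin 7 → ℝ) :
    ∃ d, ip d d = 1 ∧ ip a d = 0 ∧ ip b d = 0 ∧ ip c d = 0 := by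
  let L : (Fin 7 → ℝ) →ₗ[ℝ] (Fin 3 → ℝ) :=
    { toFun := fun d => ![ip a d, ip b d, ip c d]
      map_add' := by intro x y; ext i; fin_cases i <;> simp [ip_add_right]
      map_smul' := by intro r x; ext i; fin_cases i <;> simp [ip_smul_right] }
  have hL : LinearMap.ker L ≠ ⊥ := LinearMap.ker_ne_bot_of_finrank_lt (by simp)
  obtain ⟨d, hd, hd0⟩ := (Submodule.ne_bot_iff _).1 hL
  have hd' : ![ip a d, ip b d, ip c d] = 0 := hd
  have h0 : ip a d = 0 := by simpa using congrFun hd' 0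
  have h1 : ip b d = 0 := by simpa using congrFun hd' 1
  have h2 : ip c d = 0 := by simpa using congrFun hd' 2
  have hpos : 0 < ip d d := by
    have hnn : ip d d = ∑ i, d i * d i := by simp [ip, Fin.sum_univ_succ]; ring
    obtain ⟨i, hi⟩ := Function.ne_iff.1 hd0
    rw [hnn]
    exact Finset.sum_pos' (fun i _ => mul_self_nonneg _)
      ⟨i, Finset.mem_univ _, mul_self_pos.2 hi⟩
  refine ⟨(Real.sqrt (ip d d))⁻¹ • d, ?_, ?_, ?_, ?_⟩
  · rw [ip_smul_left, ip_smul_right, ← mul_assoc, ← mul_inv, Real.mul_self_sqrt hpos.le]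
    exact inv_mul_cancel₀ hpos.ne'
  all_goals rw [ip_smul_right]; simp [*]

lemma exists_frame (a b : Fin 7 → ℝ) (ha : ip a a = 1) (hb : ip b b = 1) (hab : ip a b = 0) :
    ∃ g : GL (Fin 7) ℝ, (∀ x y z : Fin 7 → ℝ,
        phi ((g : Matrix (Fin 7) (Fin 7) ℝ).mulVec x)
            ((g : Matrix (Fin 7) (Fin 7) ℝ).mulVec y)
            ((g : Matrix (Fin 7) (Fin 7) ℝ).mulVec z) = phi x y z) ∧
      (g : Matrix (Fin 7) (Fin 7) ℝ).mulVec (e 0) = a ∧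
      (g : Matrix (Fin 7) (Fin 7) ℝ).mulVec (e 1) = b := by
  obtain ⟨d, hd, had, hbd, hcd⟩ := exists_perp a b (cr a b)
  obtain ⟨c, hc⟩ : ∃ c, c = cr a b := ⟨_, rfl⟩
  obtain ⟨p, hp⟩ : ∃ c, c = cr a d := ⟨_, rfl⟩
  obtain ⟨q, hq⟩ : ∃ c, c = cr b d := ⟨_, rfl⟩
  obtain ⟨r, hr⟩ : ∃ c, c = cr a q := ⟨_, rfl⟩
  rw [← hc] at hcd
  -- inner products
  have hac : ip a c = 0 := by rw [hc]; exact ip_cr_self _ _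
  have hbc : ip b c = 0 := by rw [hc]; exact ip_cr_self' _ _
  have hap : ip a p = 0 := by rw [hp]; exact ip_cr_self _ _
  have hdp : ip d p = 0 := by rw [hp]; exact ip_cr_self' _ _
  have hbq : ip b q = 0 := by rw [hq]; exact ip_cr_self _ _
  have hdq : ip d q = 0 := by rw [hq]; exact ip_cr_self' _ _
  have haq : ip a q = 0 := by rw [hq, ip_cr_rot, ← hc, hcd]
  have hbp : ip b p = 0 := by rw [hp, ip_cr_rot, cr_anti a b, ← hc, ip_neg_left, hcd, neg_zero]
  have hcc : ip c c = 1 := by rw [hc, ip_cr_cr, ha, hb, hab]; norm_num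
  have hpp : ip p p = 1 := by rw [hp, ip_cr_cr, ha, hd, had]; norm_num
  have hqq : ip q q = 1 := by rw [hq, ip_cr_cr, hb, hd, hbd]; norm_num
  have hrr : ip r r = 1 := by rw [hr, ip_cr_cr, ha, hqq, haq]; norm_num
  have hba : ip b a = 0 := by rw [ip_comm, hab]
  have hda : ip d a = 0 := by rw [ip_comm, had]
  have hdb : ip d b = 0 := by rw [ip_comm, hbd]
  have hca : ip c a = 0 := by rw [ip_comm, hac]
  have hcb : ip c b = 0 := by rw [ip_comm, hbc]
  have hdc : ip d c = 0 := by rw [ip_comm, hcd]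
  have hpa : ip p a = 0 := by rw [ip_comm, hap]
  have hpb : ip p b = 0 := by rw [ip_comm, hbp]
  have hpd : ip p d = 0 := by rw [ip_comm, hdp]
  have hqa : ip q a = 0 := by rw [ip_comm, haq]
  have hqb : ip q b = 0 := by rw [ip_comm, hbq]
  have hqd : ip q d = 0 := by rw [ip_comm, hdq]
  have hcp : ip c p = 0 := by rw [hc, hp, ip_cr_cr, hbd, hab]; norm_num
  have hcq : ip c q = 0 := by
    rw [hc, hq, cr_anti b a, ip_neg_left, ip_cr_cr, had, hba]; norm_num
  have hpq : ip p q = 0 := by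
    rw [hp, hq, cr_anti d a, cr_anti d b, ip_neg_left, ip_neg_right, ip_cr_cr, hab, hda]; norm_num
  have hpc : ip p c = 0 := by rw [ip_comm, hcp]
  have hqc : ip q c = 0 := by rw [ip_comm, hcq]
  have hqp : ip q p = 0 := by rw [ip_comm, hpq]
  -- products
  have t01 : cr a b = c := hc.symm
  have t02 : cr a c = -b := by rw [hc, cr_sq ha hab]
  have t03 : cr a d = p := hp.symm
  have t04 : cr a p = -d := by rw [hp, cr_sq ha had]
  have t05 : cr a q = r := hr.symm
  have t06 : cr a r = -q := by rw [hr, cr_sq ha haq]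
  have t12 : cr b c = a := by rw [hc, cr_anti b a, cr_neg_right, cr_sq hb hba, neg_neg]
  have t13 : cr b d = q := hq.symm
  have t14 : cr b p = -r := by rw [hp, cr_swap hba hbd had, t13, t05]
  have hr' : r = - cr b p := by rw [t14, neg_neg]
  have t15 : cr b q = -d := by rw [hq, cr_sq hb hbd]
  have t16 : cr b r = p := by rw [hr', cr_neg_right, cr_sq hb hbp, neg_neg]
  have t23 : cr c d = -r := by
    rw [cr_anti d c, hc, cr_swap hda hdb hab, cr_anti b d, t13, cr_neg_right, t05, neg_neg]
  have hr'' : r = - cr c d := by rw [t23, neg_neg]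
  have t24 : cr c p = -q := by rw [hp, cr_swap hca hcd had, t23, cr_neg_right, t06, neg_neg]
  have t25 : cr c q = p := by rw [hq, cr_swap hcb hcd hbd, t23, cr_neg_right, t16, neg_neg]
  have t26 : cr c r = d := by rw [hr'', cr_neg_right, cr_sq hcc hcd, neg_neg]
  have t34 : cr d p = a := by rw [hp, cr_anti d a, cr_neg_right, cr_sq hd hda, neg_neg]
  have t35 : cr d q = b := by rw [hq, cr_anti d b, cr_neg_right, cr_sq hd hdb, neg_neg]
  have t36 : cr d r = -c := by
    rw [hr'', cr_anti d c, neg_neg, cr_sq hd hdc]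
  have t45 : cr p q = -c := by
    rw [hq, cr_swap hpb hpd hbd, cr_anti d p, t34, cr_neg_right, cr_anti a b, t01, neg_neg]
  have t46 : cr p r = -b := by rw [hr, cr_swap hpa hpq haq, t45, cr_neg_right, t02, neg_neg]
  have t56 : cr q r = a := by rw [hr, cr_anti q a, cr_neg_right, cr_sq hqq hqa, neg_neg]
  have har : ip a r = 0 := by rw [hr]; exact ip_cr_self _ _
  have hqr : ip q r = 0 := by rw [hr]; exact ip_cr_self' _ _
  have hbr : ip b r = 0 := by rw [hr', ip_neg_right, ip_cr_self, neg_zero]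
  have hpr : ip p r = 0 := by rw [hr', ip_neg_right, ip_cr_self', neg_zero]
  have hcr : ip c r = 0 := by rw [hr'', ip_neg_right, ip_cr_self, neg_zero]
  have hdr : ip d r = 0 := by rw [hr'', ip_neg_right, ip_cr_self', neg_zero]
  have hra : ip r a = 0 := by rw [ip_comm, har]
  have hrb : ip r b = 0 := by rw [ip_comm, hbr]
  have hrc : ip r c = 0 := by rw [ip_comm, hcr]
  have hrd : ip r d = 0 := by rw [ip_comm, hdr]
  have hrp : ip r p = 0 := by rw [ip_comm, hpr]
  have hrq : ip r q = 0 := by rw [ip_comm, hqr]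
  have s01 := cr_anti a b
  have s02 := cr_anti a c
  have s03 := cr_anti a d
  have s04 := cr_anti a p
  have s05 := cr_anti a q
  have s06 := cr_anti a r
  have s12 := cr_anti b c
  have s13 := cr_anti b d
  have s14 := cr_anti b p
  have s15 := cr_anti b q
  have s16 := cr_anti b r
  have s23 := cr_anti c d
  have s24 := cr_anti c p
  have s25 := cr_anti c q
  have s26 := cr_anti c r
  have s34 := cr_anti d p
  have s35 := cr_anti d q
  have s36 := cr_anti d r
  have s45 := cr_anti p q
  have s46 := cr_anti p r
  have s56 := cr_anti q r
  let A : Matrix (Fin 7) (Fin 7) ℝ := Matrix.of fun i j => ![a i, b i, c i, d i, p i, q i, r i] j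
  have hA : ∀ x, A.mulVec x = x 0 • a + x 1 • b + x 2 • c + x 3 • d + x 4 • p + x 5 • q
      + x 6 • r := by
    intro x; ext i
    simp [A, Matrix.mulVec, dotProduct, Fin.sum_univ_succ]; ring
  have hI : ∀ x y, ip (A.mulVec x) (A.mulVec y) = ip x y := by
    intro x y
    rw [hA, hA]
    simp only [ip_add_left, ip_add_right, ip_smul_left, ip_smul_right, ha, hb, hcc, hd, hpp, hqq, hrr,
      hab, hac, had, hap, haq, har, hba, hbc, hbd, hbp, hbq, hbr, hca, hcb, hcd, hcp, hcq, hcr,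
      hda, hdb, hdc, hdp, hdq, hdr, hpa, hpb, hpc, hpd, hpq, hpr, hqa, hqb, hqc, hqd, hqp, hqr,
      hra, hrb, hrc, hrd, hrp, hrq, mul_zero, add_zero,
      zero_add, mul_one]
    simp only [ip]; ring
  have hC : ∀ x y, cr (A.mulVec x) (A.mulVec y) = A.mulVec (cr x y) := by
    intro x y
    rw [hA, hA, hA]
    simp only [cr_add_left, cr_add_right, cr_smul_left, cr_smul_right, cr_self,
      s01, s02, s03, s04, s05, s06, s12, s13, s14, s15, s16, s23, s24, s25, s26, s34, s35, s36,
      s45, s46, s56,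
      t01, t02, t03, t04, t05, t06, t12, t13, t14, t15, t16, t23, t24, t25, t26, t34, t35, t36,
      t45, t46, t56]
    simp only [cr, Matrix.cons_val]
    module
  have hinj : Function.Injective A.mulVec := by
    intro x y hxy
    have key : ∀ x i, x i = ip (A.mulVec x) (A.mulVec (e i)) := by
      intro x i
      rw [hI]
      fin_cases i <;> simp [ip, e]
    ext i
    rw [key x, key y, hxy]
  have hu : IsUnit A := Matrix.mulVec_injective_iff_isUnit.1 hinj
  refine ⟨hu.unit, ?_, ?_, ?_⟩
  · intro x y z
    rw [IsUnit.unit_spec, phi_eq, phi_eq, hC, hI]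
  · rw [IsUnit.unit_spec, hA]; simp [e]
  · rw [IsUnit.unit_spec, hA]; simp [e]

/-- the stabilizer of `φ` acts transitively on orthonormal pairs of vectors
in `ℝ⁷`. -/
theorem stabilizer_transitive_on_orthonormal_pairs (u₁ u₂ v₁ v₂ : Fin 7 → ℝ)
    (hu₁ : ∑ i : Fin 7, u₁ i * u₁ i = 1) (hu₂ : ∑ i : Fin 7, u₂ i * u₂ i = 1)
    (hv₁ : ∑ i : Fin 7, v₁ i * v₁ i = 1) (hv₂ : ∑ i : Fin 7, v₂ i * v₂ i = 1)
    (hu : ∑ i : Fin 7, u₁ i * u₂ i = 0) (hv : ∑ i : Fin 7, v₁ i * v₂ i = 0) :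
    ∃ g : GL (Fin 7) ℝ,
      (∀ x y z : Fin 7 → ℝ,
        phi ((g : Matrix (Fin 7) (Fin 7) ℝ).mulVec x)
            ((g : Matrix (Fin 7) (Fin 7) ℝ).mulVec y)
            ((g : Matrix (Fin 7) (Fin 7) ℝ).mulVec z) = phi x y z) ∧
      (g : Matrix (Fin 7) (Fin 7) ℝ).mulVec u₁ = v₁ ∧
      (g : Matrix (Fin 7) (Fin 7) ℝ).mulVec u₂ = v₂ := by
  have conv : ∀ x y : Fin 7 → ℝ, ∑ i : Fin 7, x i * y i = ip x y := by
    intro x y; simp [ip, Fin.sum_univ_succ]; ring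
  rw [conv] at hu₁ hu₂ hv₁ hv₂ hu hv
  obtain ⟨g, hg, hg1, hg2⟩ := exists_frame u₁ u₂ hu₁ hu₂ hu
  obtain ⟨k, hk, hk1, hk2⟩ := exists_frame v₁ v₂ hv₁ hv₂ hv
  have hgi : ∀ x, (g : Matrix (Fin 7) (Fin 7) ℝ).mulVec
      (((g⁻¹ : GL (Fin 7) ℝ) : Matrix (Fin 7) (Fin 7) ℝ).mulVec x) = x := by
    intro x; rw [Matrix.mulVec_mulVec, Units.mul_inv, Matrix.one_mulVec]
  have hgi' : ∀ x, ((g⁻¹ : GL (Fin 7) ℝ) : Matrix (Fin 7) (Fin 7) ℝ).mulVec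
      ((g : Matrix (Fin 7) (Fin 7) ℝ).mulVec x) = x := by
    intro x; rw [Matrix.mulVec_mulVec, Units.inv_mul, Matrix.one_mulVec]
  refine ⟨k * g⁻¹, ?_, ?_, ?_⟩
  · intro x y z
    simp only [Units.val_mul, ← Matrix.mulVec_mulVec]
    rw [hk, ← hg, hgi, hgi, hgi]
  · simp only [Units.val_mul, ← Matrix.mulVec_mulVec]
    rw [← hg1, hgi', hk1]
  · simp only [Units.val_mul, ← Matrix.mulVec_mulVec]
    rw [← hg2, hgi', hk2]

end G2

end
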